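/- Let J be a nonempty finite index set with m = |J|, and for each j ∈ J let F_j be a real inner product space; equip the product E = Π_{j∈J} F_j with the inner product ⟨y, z⟩ = Σ_{j∈J} ⟨y_j, z_j⟩ (so ‖y‖² = Σ_j ‖y_j‖²). For y, ỹ ∈ E and j ∈ J, let update_j(y, ỹ) be the point of E whose j-th coordinate is ỹ_j and whose other coordinates agree with y. Let I be a nonempty finite index set and for each i ∈ I let h_i : E → ℝ be convex and Fréchet differentiable with ∇h_i Lipschitz with constant ℓ_i ≥ 0; for each j ∈ J let g_j : F_j → ℝ be any function. Define D(y) = Σ_{i∈I} h_i(y) + Σ_{j∈J} g_j(y_j) and η₁ = (m−1)·(Σ_{i∈I} ℓ_i)/m. Then for all y, ỹ ∈ E: (1/m)·Σ_{j∈J} D(update_j(y, ỹ)) ≤ ((m−1)/m)·D(y) + (1/m)·D(ỹ) + (η₁/m)·‖ỹ − y‖². -/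

import Mathlib

/-!
Write `d = yt - y` and let `d_j` be the vector with `j`-th coordinate that of `d` and zero
elsewhere, so that `upd y yt j = y + d_j`, `∑_j d_j = d` and `∑_j ‖d_j‖² = ‖d‖²`.
For `f` convex with `L`-Lipschitz gradient, the quadratic upper bound
`f (y + d_j) ≤ f y + ⟪∇f y, d_j⟫ + L/2 ‖d_j‖²` (`descent_upper`) summed over `j`, followed by the
gradient inequality `⟪∇f y, d⟫ ≤ f yt - f y` (`gradient_lower`), gives
`∑_j f (y + d_j) ≤ (m-1) f y + f yt + L/2 ‖d‖²`. For `m ≥ 2` one has `1/2 ≤ (m-1)/m`, and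
for `m = 1` both sides reduce to `f yt`; this is `sum_update_le`. The separable part is an exact
identity (`sum_separable_update`): each `g_k` is evaluated once at `yt k` and `m-1` times at `y k`.
-/

section Gradient

variable {E : Type*} [NormedAddCommGroup E] [InnerProductSpace ℝ E]

lemma hasDerivAt_along_line {f : E → ℝ} {f' : E → E}
    (hf : ∀ y, HasFDerivAt f (innerSL ℝ (f' y)) y) (x d : E) (t : ℝ) :
    HasDerivAt (fun s : ℝ => f (x + s • d)) (inner ℝ (f' (x + t • d)) d) t := by
  have h1 : HasDerivAt (fun s : ℝ => x + s • d) d t := by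
    simpa using ((hasDerivAt_id t).smul_const d).const_add x
  exact (hf (x + t • d)).comp_hasDerivAt t h1

lemma descent_upper {f : E → ℝ} {f' : E → E}
    (hf : ∀ y, HasFDerivAt f (innerSL ℝ (f' y)) y) {L : ℝ}
    (hL : ∀ u w, ‖f' u - f' w‖ ≤ L * ‖u - w‖) (x d : E) :
    f (x + d) ≤ f x + inner ℝ (f' x) d + L / 2 * ‖d‖ ^ 2 := by
  -- The gap between `f` and its quadratic upper model is nonincreasing along the segment.
  let φ : ℝ → ℝ := fun t => f (x + t • d) - t * inner ℝ (f' x) d - L / 2 * ‖d‖ ^ 2 * t ^ 2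
  have hφ : ∀ t, HasDerivAt φ
      (inner ℝ (f' (x + t • d)) d - inner ℝ (f' x) d - L / 2 * ‖d‖ ^ 2 * (2 * t)) t := by
    intro t
    have h2 : HasDerivAt (fun s : ℝ => s * inner ℝ (f' x) d) (inner ℝ (f' x) d) t := by
      simpa using (hasDerivAt_id t).mul_const (inner ℝ (f' x) d)
    have h3 : HasDerivAt (fun s : ℝ => L / 2 * ‖d‖ ^ 2 * s ^ 2)
        (L / 2 * ‖d‖ ^ 2 * (2 * t)) t := by
      simpa using (hasDerivAt_pow 2 t).const_mul (L / 2 * ‖d‖ ^ 2)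
    exact ((hasDerivAt_along_line hf x d t).sub h2).sub h3
  have hanti : AntitoneOn φ (Set.Icc 0 1) := by
    apply antitoneOn_of_deriv_nonpos (convex_Icc 0 1)
    · exact fun t _ => (hφ t).continuousAt.continuousWithinAt
    · exact fun t _ => (hφ t).differentiableAt.differentiableWithinAt
    · intro t ht
      rw [interior_Icc] at ht
      rw [(hφ t).deriv, ← inner_sub_left]
      have h4 := real_inner_le_norm (f' (x + t • d) - f' x) d
      have h5 := hL (x + t • d) x
      rw [add_sub_cancel_left, norm_smul, Real.norm_of_nonneg ht.1.le] at h5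
      nlinarith [mul_le_mul_of_nonneg_right h5 (norm_nonneg d)]
  have h01 := hanti (Set.left_mem_Icc.2 zero_le_one) (Set.right_mem_Icc.2 zero_le_one) zero_le_one
  simp only [φ, one_smul, zero_smul, add_zero] at h01
  linarith

lemma gradient_lower {f : E → ℝ} {f' : E → E} (hc : ConvexOn ℝ Set.univ f)
    (hf : ∀ y, HasFDerivAt f (innerSL ℝ (f' y)) y) (x z : E) :
    f x + inner ℝ (f' x) (z - x) ≤ f z := by
  have hline : ConvexOn ℝ Set.univ (fun s : ℝ => f (x + s • (z - x))) := by
    have := hc.comp_affineMap (AffineMap.lineMap x z : ℝ →ᵃ[ℝ] E)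
    simpa [Function.comp_def, AffineMap.lineMap_apply, add_comm] using this
  have h0 := hasDerivAt_along_line hf x (z - x) 0
  have h1 := hline.le_slope_of_hasDerivAt (Set.mem_univ _) (Set.mem_univ 1) one_pos h0
  simp [slope_def_field] at h1
  linarith

end Gradient

section Product

variable {J : Type*} [Fintype J] [DecidableEq J]
  {F : J → Type*}

lemma sum_separable_update (g : ∀ j, F j → ℝ) (y yt : ∀ j, F j) :
    ∑ j, ∑ k, g k (Function.update y j (yt j) k) =
      ((Fintype.card J : ℝ) - 1) * ∑ k, g k (y k) + ∑ k, g k (yt k) := by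
  have hpt : ∀ j k, g k (Function.update y j (yt j) k) =
      g k (y k) + if j = k then g k (yt k) - g k (y k) else 0 := by
    intro j k
    by_cases hjk : j = k
    · subst hjk; simp
    · simp [hjk, Function.update_of_ne (Ne.symm hjk)]
  simp only [hpt, Finset.sum_add_distrib, Finset.sum_ite_eq, Finset.mem_univ, if_true,
    Finset.sum_sub_distrib, Finset.sum_const, Finset.card_univ, nsmul_eq_mul]
  ring

variable [∀ j, NormedAddCommGroup (F j)] [∀ j, InnerProductSpace ℝ (F j)]

/-- The averaged inequality for a single smooth convex summand, multiplied through by `m`. -/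
lemma sum_update_le [Nonempty J] {f : PiLp 2 F → ℝ} {f' : PiLp 2 F → PiLp 2 F}
    (hc : ConvexOn ℝ Set.univ f)
    (hf : ∀ y, HasFDerivAt f (innerSL ℝ (f' y)) y) {L : ℝ} (hL0 : 0 ≤ L)
    (hL : ∀ u w, ‖f' u - f' w‖ ≤ L * ‖u - w‖) (y yt : PiLp 2 F) (u : J → PiLp 2 F)
    (hu : ∀ j, u j = y + PiLp.single 2 j ((yt - y) j)) :
    ∑ j, f (u j) ≤ ((Fintype.card J : ℝ) - 1) * f y + f yt +
      ((Fintype.card J : ℝ) - 1) / Fintype.card J * L * ‖yt - y‖ ^ 2 := by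
  set d := yt - y with hd
  have hsum : ∑ j, PiLp.single 2 j (d j) = d := by
    ext k
    simp
  rcases (Nat.succ_le_of_lt (Fintype.card_pos (α := J))).eq_or_lt with h1 | h2
  · obtain ⟨j₀, hj₀⟩ := Fintype.card_eq_one_iff.1 h1.symm
    have huniv : (Finset.univ : Finset J) = {j₀} := by
      ext j; simp [hj₀ j]
    have hyt : u j₀ = yt := by
      rw [huniv, Finset.sum_singleton] at hsum
      rw [hu, hsum, hd, add_sub_cancel]
    simp [huniv, hyt, ← h1]
  · have hm2 : (2 : ℝ) ≤ Fintype.card J := by exact_mod_cast h2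
    have hhalf : (1 : ℝ) / 2 ≤ ((Fintype.card J : ℝ) - 1) / Fintype.card J := by
      rw [div_le_div_iff₀ (by norm_num) (by linarith)]
      linarith
    have hstep : ∑ j, f (u j) ≤ ∑ j, (f y + inner ℝ (f' y) (PiLp.single 2 j (d j)) +
        L / 2 * ‖PiLp.single 2 j (d j)‖ ^ 2) := by
      refine Finset.sum_le_sum fun j _ => ?_
      rw [hu j]
      exact descent_upper hf hL _ _
    have hnorm : ∑ j, ‖PiLp.single 2 j (d j)‖ ^ 2 = ‖d‖ ^ 2 := by
      simp [PiLp.norm_sq_eq_of_L2]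
    rw [Finset.sum_add_distrib, Finset.sum_add_distrib, ← inner_sum, ← Finset.mul_sum, hsum,
      hnorm, Finset.sum_const, Finset.card_univ, nsmul_eq_mul] at hstep
    have hgrad := gradient_lower hc hf y yt
    have hq := mul_le_mul_of_nonneg_right hhalf (mul_nonneg hL0 (sq_nonneg ‖d‖))
    rw [← hd] at hgrad
    linarith

end Product

/-- Proposition 4.1 in averaged form: with `D(y) = ∑_i h_i(y) + ∑_j g_j(y_j)` on the
`ℓ²`-product `E = Π_j F_j`, each `h_i` convex with `ℓ_i`-Lipschitz gradient, and
`η₁ = (m-1)(∑_i ℓ_i)/m`, averaging over single-coordinate updates gives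
`(1/m) ∑_j D(update_j(y, yt)) ≤ ((m-1)/m) D(y) + (1/m) D(yt) + (η₁/m)‖yt - y‖²`. -/
theorem averaged_descent_for_dual_objective
    {J : Type*} [Fintype J] [Nonempty J] [DecidableEq J]
    {F : J → Type*} [∀ j, NormedAddCommGroup (F j)] [∀ j, InnerProductSpace ℝ (F j)]
    {I : Type*} [Fintype I] [Nonempty I]
    (h : I → PiLp 2 F → ℝ) (hconv : ∀ i, ConvexOn ℝ Set.univ (h i))
    (h' : I → PiLp 2 F → PiLp 2 F)
    (hdiff : ∀ i, ∀ y : PiLp 2 F, HasFDerivAt (h i) ((innerSL ℝ) (h' i y)) y)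
    (ℓ : I → ℝ) (hℓ : ∀ i, 0 ≤ ℓ i)
    (hLip : ∀ i, ∀ u w : PiLp 2 F, ‖h' i u - h' i w‖ ≤ ℓ i * ‖u - w‖)
    (g : ∀ j, F j → ℝ)
    (m : ℕ) (hm : m = Fintype.card J)
    (D : PiLp 2 F → ℝ) (hD : ∀ y : PiLp 2 F, D y = ∑ i : I, h i y + ∑ j : J, g j (y j))
    (η₁ : ℝ) (hη₁ : η₁ = (m - 1) * (∑ i : I, ℓ i) / m)
    (upd : PiLp 2 F → PiLp 2 F → J → PiLp 2 F)
    (hupd : ∀ y yt : PiLp 2 F, ∀ j : J, upd y yt j = Function.update y j (yt j)) :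
    ∀ y yt : PiLp 2 F,
      (1 / m) * ∑ j : J, D (upd y yt j) ≤
        ((m - 1) / m) * D y + (1 / m) * D yt + (η₁ / m) * ‖yt - y‖ ^ 2 := by
  intro y yt
  have hm0 : (0 : ℝ) < m := by
    rw [hm]; exact_mod_cast Fintype.card_pos
  have hu : ∀ j, upd y yt j = y + PiLp.single 2 j ((yt - y) j) := by
    intro j
    ext k
    rw [hupd]
    by_cases hkj : k = j
    · subst hkj; simp
    · simp [hkj]
  have hsmooth : ∑ i, ∑ j, h i (upd y yt j) ≤ ∑ i, (((m : ℝ) - 1) * h i y + h i yt +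
      ((m : ℝ) - 1) / m * ℓ i * ‖yt - y‖ ^ 2) := by
    refine Finset.sum_le_sum fun i _ => ?_
    rw [hm]
    exact sum_update_le (hconv i) (hdiff i) (hℓ i) (hLip i) y yt _ hu
  have hsep := sum_separable_update g y yt
  rw [Finset.sum_add_distrib, Finset.sum_add_distrib, ← Finset.mul_sum, ← Finset.sum_mul,
    ← Finset.mul_sum] at hsmooth
  have hDsum : ∑ j, D (upd y yt j) ≤ ((m : ℝ) - 1) * D y + D yt + η₁ * ‖yt - y‖ ^ 2 := by
    simp only [hD, Finset.sum_add_distrib, hupd]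
    rw [Finset.sum_comm, hsep, ← hm, hη₁, mul_div_right_comm]
    linarith
  calc (1 / (m : ℝ)) * ∑ j, D (upd y yt j)
      ≤ (1 / (m : ℝ)) * (((m : ℝ) - 1) * D y + D yt + η₁ * ‖yt - y‖ ^ 2) :=
        mul_le_mul_of_nonneg_left hDsum (by positivity)
    _ = _ := by ring
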